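/- Let R be a nonempty proper subset of M ⊆ V (for instance one block of a partition of M into A, B, C), and let L ⊆ M∖R be nonempty. If there exists v ∈ L such that X_R ⟂ X_v | X_{(M∖R)∖{v}}, then λ_L^M(x_L) = λ_L^{M∖R}(x_L) for all x_L ∈ 𝔛_L, i.e., the table 𝔛_M is collapsible over R into 𝔛_{M∖R} with respect to λ_L^M. -/

import Mathlib

open Finset

variable {V : Type*} [Fintype V] [DecidableEq V]
variable {𝔛 : V → Type*} [∀ v, Fintype (𝔛 v)] [∀ v, DecidableEq (𝔛 v)]
  [∀ v, Nonempty (𝔛 v)]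

/-- The marginal `p_A` of a distribution `p` on the full table, evaluated at the
`A`-coordinates of `x`. -/
noncomputable def margin (p : (∀ v, 𝔛 v) → ℝ) (A : Finset V) (x : ∀ v, 𝔛 v) : ℝ :=
  ∑ y ∈ Finset.univ.filter (fun y : ∀ v, 𝔛 v => ∀ v ∈ A, y v = x v), p y

/-- `ν_L^M(x_L) = (1/|𝔛_{M∖L}|) Σ_{j ∈ 𝔛_M : j_L = x_L} log p_M(j)`, written with sums over
full configurations (for `L ⊆ M` the extra coordinates cancel against the normalization). -/
noncomputable def nu (p : (∀ v, 𝔛 v) → ℝ) (L M : Finset V) (x : ∀ v, 𝔛 v) : ℝ :=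
  (∏ v ∈ Lᶜ, (Fintype.card (𝔛 v) : ℝ))⁻¹ *
    ∑ j ∈ Finset.univ.filter (fun j : ∀ v, 𝔛 v => ∀ v ∈ L, j v = x v),
      Real.log (margin p M j)

/-- The marginal log-linear parameter `λ_L^M(x_L) = Σ_{L' ⊆ L} (−1)^{|L∖L'|} ν_{L'}^M(x_{L'})`. -/
noncomputable def mll (p : (∀ v, 𝔛 v) → ℝ) (L M : Finset V) (x : ∀ v, 𝔛 v) : ℝ :=
  ∑ L' ∈ L.powerset, (-1 : ℝ) ^ ((L \ L').card) * nu p L' M x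

/-- `X_A ⟂ X_B | X_C`: `p_{A∪B∪C}·p_C = p_{A∪C}·p_{B∪C}` pointwise. -/
def CondIndep (p : (∀ v, 𝔛 v) → ℝ) (A B C : Finset V) : Prop :=
  ∀ x : ∀ v, 𝔛 v,
    margin p (A ∪ B ∪ C) x * margin p C x = margin p (A ∪ C) x * margin p (B ∪ C) x

lemma margin_pos (p : (∀ v, 𝔛 v) → ℝ) (hp : ∀ x, 0 < p x) (A : Finset V) (x : ∀ v, 𝔛 v) :
    0 < margin p A x := by
  unfold margin
  apply Finset.sum_pos (fun y _ => hp y)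
  exact ⟨x, by simp⟩

lemma margin_update (p : (∀ v, 𝔛 v) → ℝ) (A : Finset V) (x : ∀ v, 𝔛 v) (v : V) (hv : v ∉ A)
    (a : 𝔛 v) : margin p A (Function.update x v a) = margin p A x := by
  unfold margin
  congr 1
  ext y
  simp only [Finset.mem_filter, Finset.mem_univ, true_and]
  refine forall₂_congr fun w hw => ?_
  have : w ≠ v := fun h => hv (h ▸ hw)
  rw [Function.update_of_ne this]

lemma sum_insert_aux (g : (∀ v, 𝔛 v) → ℝ) (L : Finset V) (v : V) (hv : v ∉ L)
    (hg : ∀ x a, g (Function.update x v a) = g x) (x : ∀ v, 𝔛 v) :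
    ∑ j ∈ Finset.univ.filter (fun j : ∀ v, 𝔛 v => ∀ w ∈ L, j w = x w), g j =
    (Fintype.card (𝔛 v) : ℝ) *
    ∑ j ∈ Finset.univ.filter (fun j : ∀ v, 𝔛 v => ∀ w ∈ insert v L, j w = x w), g j := by
  have hne : ∀ w ∈ L, w ≠ v := fun w hw h => hv (h ▸ hw)
  rw [← Finset.sum_fiberwise _ (fun j : ∀ v, 𝔛 v => j v)]
  rw [Finset.sum_congr rfl (g := fun _ => ∑ j ∈ Finset.univ.filter
    (fun j : ∀ v, 𝔛 v => ∀ w ∈ insert v L, j w = x w), g j)]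
  · simp
  intro a _
  refine Finset.sum_bij' (fun j _ => Function.update j v (x v))
    (fun j _ => Function.update j v a) ?_ ?_ ?_ ?_ ?_
  · intro j hj
    simp only [Finset.mem_filter, Finset.mem_univ, true_and, Finset.mem_insert, forall_eq_or_imp,
      Function.update_self] at hj ⊢
    intro w hw
    rw [Function.update_of_ne (hne w hw), hj.1 w hw]
  · intro j hj
    simp only [Finset.mem_filter, Finset.mem_univ, true_and, Finset.mem_insert, forall_eq_or_imp,
      Function.update_self, and_true] at hj ⊢
    intro w hw
    rw [Function.update_of_ne (hne w hw), hj.2 w hw]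
  · intro j hj
    simp only [Finset.mem_filter, Finset.mem_univ, true_and] at hj
    simp [← hj.2]
  · intro j hj
    simp only [Finset.mem_filter, Finset.mem_univ, true_and, Finset.mem_insert,
      forall_eq_or_imp] at hj
    simp [← hj.1]
  · intro j _
    exact (hg j _).symm

theorem stmt18 (p : (∀ v, 𝔛 v) → ℝ) (hp : ∀ x, 0 < p x) (hsum : ∑ x, p x = 1)
    (hcard : ∀ v : V, 2 ≤ Fintype.card (𝔛 v))
    (R M L : Finset V) (hR : R.Nonempty) (hRM : R ⊂ M)
    (hL : L.Nonempty) (hLMR : L ⊆ M \ R)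
    (hex : ∃ v ∈ L, CondIndep p R {v} ((M \ R) \ {v})) :
    ∀ x : ∀ v, 𝔛 v, mll p L M x = mll p L (M \ R) x := by
  intro x
  obtain ⟨v, hvL, hci⟩ := hex
  have hvMR := hLMR hvL
  have hvM : v ∈ M := (Finset.mem_sdiff.1 hvMR).1
  have hvR : v ∉ R := (Finset.mem_sdiff.1 hvMR).2
  have e1 : R ∪ {v} ∪ ((M \ R) \ {v}) = M := by
    ext w
    have := @hRM.1 w
    by_cases h : w = v
    · subst h; simp [hvM]
    · simp [h]; tauto
  have e2 : {v} ∪ ((M \ R) \ {v}) = M \ R := by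
    ext w
    by_cases h : w = v
    · subst h; simp [hvM, hvR]
    · simp [h]
  set g : (∀ v, 𝔛 v) → ℝ := fun j => Real.log (margin p M j) - Real.log (margin p (M \ R) j)
    with hgdef
  have hg' : ∀ j, g j = Real.log (margin p (R ∪ ((M \ R) \ {v})) j)
      - Real.log (margin p ((M \ R) \ {v}) j) := by
    intro j
    have h := hci j
    rw [e1, e2] at h
    have h2 := congrArg Real.log h
    rw [Real.log_mul (margin_pos p hp _ _).ne' (margin_pos p hp _ _).ne',
      Real.log_mul (margin_pos p hp _ _).ne' (margin_pos p hp _ _).ne'] at h2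
    simp only [hgdef]
    linarith
  have hg : ∀ x a, g (Function.update x v a) = g x := by
    intro x a
    rw [hg', hg', margin_update _ _ _ _ (by simp [hvR]), margin_update _ _ _ _ (by simp)]
  have key : ∀ L' : Finset V, v ∉ L' →
      nu p (insert v L') M x - nu p (insert v L') (M \ R) x
        = nu p L' M x - nu p L' (M \ R) x := by
    intro L' hv
    unfold nu
    rw [← mul_sub, ← mul_sub, ← Finset.sum_sub_distrib, ← Finset.sum_sub_distrib]
    have h := sum_insert_aux g L' v hv hg x
    simp only [hgdef] at h
    rw [h]
    have hc : L'ᶜ = insert v (insert v L')ᶜ := by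
      ext w
      by_cases h : w = v
      · subst h; simp [hv]
      · simp [h]
    have hc0 : (Fintype.card (𝔛 v) : ℝ) ≠ 0 := by
      have := hcard v
      positivity
    rw [hc, Finset.prod_insert (by simp), mul_inv]
    field_simp
  rw [← sub_eq_zero]
  unfold mll
  rw [← Finset.sum_sub_distrib, ← Finset.insert_erase hvL,
    Finset.sum_powerset_insert (Finset.notMem_erase v L), ← Finset.sum_add_distrib]
  apply Finset.sum_eq_zero
  intro t ht
  have hvt : v ∉ t := fun h => Finset.notMem_erase v L (Finset.mem_powerset.1 ht h)
  have hcd : (insert v (L.erase v) \ t).card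
      = (insert v (L.erase v) \ insert v t).card + 1 := by
    have : insert v (L.erase v) \ t = insert v (insert v (L.erase v) \ insert v t) := by
      ext w
      by_cases h : w = v
      · subst h; simp [hvt]
      · simp [h]
    rw [this, Finset.card_insert_of_notMem (by simp)]
  rw [hcd, pow_succ]
  linear_combination ((-1 : ℝ) ^ (insert v (L.erase v) \ insert v t).card) * key t hvt
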